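/- arXiv:2501.02769 — 4 statements merged into one kernel-verified Lean document; each statement's English description precedes it below -/
import Mathlib

section
/- (Gelfand) Let B be a complex unital Banach algebra with unit e, and let a ∈ B be invertible with sup_{n∈ℤ} ‖aⁿ‖ < ∞. Suppose the spectrum of a is a singleton, σ(a) = {λ}. Then a = λ e. -/
/-- If the integer powers of `a` are bounded by `M`, then any right inverse of `z - a` has norm at
most `M / |‖z‖ - 1|`. -/
theorem abs_norm_sub_one_mul_norm_le_of_zpow_bounded
    {B : Type*} [NormedRing B] [NormedAlgebra ℂ B] (a : Bˣ) {M : ℝ}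
    (hM : ∀ n : ℤ, ‖((a ^ n : Bˣ) : B)‖ ≤ M) {z : ℂ} {R : B}
    (hR : (z • (1 : B) - a) * R = 1) : |‖z‖ - 1| * ‖R‖ ≤ M := by
  set S : ℝ := ⨆ k : ℤ, ‖((a ^ k : Bˣ) : B) * R‖ with hS
  have hbdd : BddAbove (Set.range fun k : ℤ => ‖((a ^ k : Bˣ) : B) * R‖) := by
    refine ⟨M * ‖R‖, ?_⟩
    rintro _ ⟨k, rfl⟩
    exact (norm_mul_le _ _).trans (mul_le_mul_of_nonneg_right (hM k) (norm_nonneg _))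
  have hle (k : ℤ) : ‖((a ^ k : Bˣ) : B) * R‖ ≤ S := le_ciSup hbdd k
  have hstep (k : ℤ) : z • (((a ^ k : Bˣ) : B) * R) - ((a ^ (k + 1) : Bˣ) : B) * R
      = ((a ^ k : Bˣ) : B) := by
    have h := congrArg (fun x => ((a ^ k : Bˣ) : B) * x) hR
    simpa [zpow_add_one, sub_mul, mul_sub, mul_assoc] using h
  have hRS : ‖R‖ ≤ S := by simpa using hle 0
  have houter : ‖z‖ * S ≤ M + S := by
    rw [hS, Real.mul_iSup_of_nonneg (norm_nonneg z)]
    refine ciSup_le fun k => ?_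
    rw [← norm_smul, ← sub_add_cancel (z • (((a ^ k : Bˣ) : B) * R))
      (((a ^ (k + 1) : Bˣ) : B) * R), hstep]
    exact (norm_add_le _ _).trans (add_le_add (hM k) (hle _))
  have hinner : S ≤ ‖z‖ * S + M := by
    refine ciSup_le fun k => ?_
    have h := hstep (k - 1)
    rw [sub_add_cancel, sub_eq_iff_eq_add, ← sub_eq_iff_eq_add'] at h
    rw [← h]
    refine (norm_sub_le _ _).trans (add_le_add ?_ (hM _))
    rw [norm_smul]
    exact mul_le_mul_of_nonneg_left (hle _) (norm_nonneg z)
  calc |‖z‖ - 1| * ‖R‖ ≤ |‖z‖ - 1| * S := mul_le_mul_of_nonneg_left hRS (abs_nonneg _)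
    _ ≤ M := by
      rcases abs_cases (‖z‖ - 1) with ⟨h, -⟩ | ⟨h, -⟩ <;> rw [h] <;> linarith

/-- A complex number all of whose natural powers are bounded lies in the closed unit disc. -/
theorem norm_le_one_of_pow_bounded {z : ℂ} {C : ℝ} (h : ∀ n : ℕ, ‖z ^ n‖ ≤ C) : ‖z‖ ≤ 1 := by
  by_contra! hz
  obtain ⟨n, hn⟩ := pow_unbounded_of_one_lt C hz
  exact (hn.trans_le (norm_pow z n ▸ h n)).false

/-- The spectrum of an invertible element with bounded integer powers lies on the unit circle. -/
theorem norm_eq_one_of_mem_spectrum_of_zpow_bounded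
    {B : Type*} [NormedRing B] [NormedAlgebra ℂ B] [CompleteSpace B] (a : Bˣ) {M : ℝ}
    (hM : ∀ n : ℤ, ‖((a ^ n : Bˣ) : B)‖ ≤ M) {μ : ℂ} (hμ : μ ∈ spectrum ℂ (a : B)) :
    ‖μ‖ = 1 := by
  have key (b : Bˣ) (hb : ∀ n : ℕ, ‖((b ^ n : Bˣ) : B)‖ ≤ M) {ν : ℂ}
      (hν : ν ∈ spectrum ℂ (b : B)) : ‖ν‖ ≤ 1 := by
    refine norm_le_one_of_pow_bounded (C := M * ‖(1 : B)‖) fun n => ?_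
    refine (spectrum.norm_le_norm_mul_of_mem (spectrum.pow_mem_pow (b : B) n hν)).trans ?_
    exact mul_le_mul_of_nonneg_right (by simpa using hb n) (norm_nonneg _)
  have hμ0 : μ ≠ 0 := spectrum.ne_zero_of_mem_of_unit hμ
  have hinv : (Units.mk0 μ hμ0 : ℂˣ)⁻¹.val ∈ spectrum ℂ ((a⁻¹ : Bˣ) : B) :=
    spectrum.inv_mem_iff.mp (by simpa using hμ)
  have h₁ := key a (fun n => by simpa using hM n) hμ
  have h₂ := key a⁻¹ (fun n => by simpa using hM (-n)) hinv
  simp only [Units.val_inv_eq_inv_val, Units.val_mk0, norm_inv] at h₂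
  exact le_antisymm h₁ ((inv_le_one₀ (norm_pos_iff.mpr hμ0)).mp h₂)

/-- The polynomial `1 + (u + u²) / s²` vanishes on the circle `‖u‖ = s` exactly where `1 + u⁻¹`
lies on the unit circle. -/
theorem norm_one_add_div_sq_eq {u : ℂ} (hu : u ≠ 0) :
    ‖1 + (u + u ^ 2) / (‖u‖ : ℂ) ^ 2‖ = |‖1 + u⁻¹‖ ^ 2 - 1| * ‖u‖ := by
  have hs : (‖u‖ : ℂ) ^ 2 = u * (starRingEnd ℂ) u := by
    rw [Complex.mul_conj, Complex.normSq_eq_norm_sq]; push_cast; rfl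
  have hc : (starRingEnd ℂ) u ≠ 0 := by simpa using hu
  have hsq : ((‖1 + u⁻¹‖ ^ 2 - 1 : ℝ) : ℂ) = (1 + u⁻¹) * (1 + ((starRingEnd ℂ) u)⁻¹) - 1 := by
    have h := Complex.mul_conj (1 + u⁻¹)
    rw [Complex.normSq_eq_norm_sq] at h
    push_cast at h ⊢
    rw [← h]
    simp
  have h : 1 + (u + u ^ 2) / (‖u‖ : ℂ) ^ 2 = ((‖1 + u⁻¹‖ ^ 2 - 1 : ℝ) : ℂ) * u := by
    rw [hsq, hs]
    field_simp
    ring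
  rw [h, norm_mul, Complex.norm_real, Real.norm_eq_abs]

/-- An entire function satisfying `|‖1 + u⁻¹‖ - 1| * ‖u‖ * ‖f u‖ ≤ M` for all `u ≠ 0` is bounded. -/
theorem norm_le_of_forall_abs_norm_one_add_inv_mul_le
    {E : Type*} [NormedAddCommGroup E] [NormedSpace ℂ E] {f : ℂ → E} (hf : Differentiable ℂ f)
    {M : ℝ} (hM : ∀ u : ℂ, u ≠ 0 → |‖1 + u⁻¹‖ - 1| * (‖u‖ * ‖f u‖) ≤ M) (u : ℂ) :
    ‖f u‖ ≤ 12 * M := by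
  set s : ℝ := 2 * ‖u‖ + 1 with hs
  have hs1 : 1 ≤ s := by have := norm_nonneg u; linarith
  have hs0 : 0 < s := by linarith
  let g : ℂ → E := fun v => (1 + (v + v ^ 2) / (s : ℂ) ^ 2) • f v
  have hg : Differentiable ℂ g := by
    refine Differentiable.smul ?_ hf
    fun_prop
  have hM0 : 0 ≤ M := le_trans (by positivity) (hM 1 one_ne_zero)
  have hcircle : ∀ v ∈ frontier (Metric.ball (0 : ℂ) s), ‖g v‖ ≤ 3 * M := by
    intro v hv
    rw [frontier_ball _ hs0.ne', mem_sphere_zero_iff_norm] at hv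
    have hv0 : v ≠ 0 := by
      rw [← norm_pos_iff, hv]; exact hs0
    have hz : ‖1 + v⁻¹‖ ≤ 2 := by
      refine (norm_add_le _ _).trans ?_
      rw [norm_inv, hv, norm_one]
      linarith [inv_le_one_of_one_le₀ hs1]
    have hfac : |‖1 + v⁻¹‖ ^ 2 - 1| = (‖1 + v⁻¹‖ + 1) * |‖1 + v⁻¹‖ - 1| := by
      rw [show ‖1 + v⁻¹‖ ^ 2 - 1 = (‖1 + v⁻¹‖ + 1) * (‖1 + v⁻¹‖ - 1) by ring, abs_mul,
        abs_of_nonneg (show 0 ≤ ‖1 + v⁻¹‖ + 1 by positivity)]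
    calc ‖g v‖ = (‖1 + v⁻¹‖ + 1) * (|‖1 + v⁻¹‖ - 1| * (‖v‖ * ‖f v‖)) := by
          simp only [g]
          rw [norm_smul, ← hv, norm_one_add_div_sq_eq hv0, hfac]
          ring
      _ ≤ 3 * M := by
          refine mul_le_mul ?_ (hM v hv0) (by positivity) (by norm_num)
          linarith
  have hus : u ∈ Metric.ball (0 : ℂ) s := by
    rw [mem_ball_zero_iff]; linarith [norm_nonneg u]
  have hgu : ‖g u‖ ≤ 3 * M := Complex.norm_le_of_forall_mem_frontier_norm_le
    Metric.isBounded_ball hg.diffContOnCl hcircle (subset_closure hus)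
  have hsmall : ‖(u + u ^ 2) / (s : ℂ) ^ 2‖ ≤ 3 / 4 := by
    rw [norm_div, norm_pow, Complex.norm_real, Real.norm_of_nonneg hs0.le,
      div_le_iff₀ (by positivity)]
    have h := norm_add_le u (u ^ 2)
    rw [norm_pow] at h
    nlinarith [norm_nonneg u]
  have hlow : 1 / 4 ≤ ‖1 + (u + u ^ 2) / (s : ℂ) ^ 2‖ := by
    have h := norm_sub_le (1 + (u + u ^ 2) / (s : ℂ) ^ 2) ((u + u ^ 2) / (s : ℂ) ^ 2)
    rw [add_sub_cancel_right, norm_one] at h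
    linarith
  have h : 1 / 4 * ‖f u‖ ≤ 3 * M := by
    refine le_trans (mul_le_mul_of_nonneg_right hlow (norm_nonneg _)) ?_
    rw [← norm_smul]
    exact hgu
  linarith

/-- Gelfand: an invertible element of a complex unital Banach algebra with
uniformly bounded integer powers whose spectrum is a singleton {λ} equals λ·e. -/
theorem gelfand_singleton_spectrum
    {B : Type*} [NormedRing B] [NormedAlgebra ℂ B] [CompleteSpace B]
    (a : Bˣ) (hpb : ∃ M : ℝ, ∀ n : ℤ, ‖((a ^ n : Bˣ) : B)‖ ≤ M)
    (μ : ℂ) (hspec : spectrum ℂ (a : B) = {μ}) :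
    (a : B) = μ • (1 : B) := by
  obtain ⟨M, hM⟩ := hpb
  have hμ1 : ‖μ‖ = 1 := norm_eq_one_of_mem_spectrum_of_zpow_bounded a hM (by simp [hspec])
  have hμ0 : μ ≠ 0 := by rw [← norm_pos_iff, hμ1]; exact one_pos
  set q : B := μ⁻¹ • (a : B) - 1 with hq
  have hfactor {u : ℂ} (hu : u ≠ 0) :
      1 - u • q = (u * μ⁻¹) • ((μ * (1 + u⁻¹)) • (1 : B) - a) := by
    rw [hq, smul_sub, smul_sub, smul_smul, smul_smul,
      show u * μ⁻¹ * (μ * (1 + u⁻¹)) = u + 1 by field_simp, add_smul, one_smul]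
    abel
  have hunit (u : ℂ) : IsUnit (1 - u • q) := by
    rcases eq_or_ne u 0 with rfl | hu
    · simp
    · have hmem : μ * (1 + u⁻¹) ∉ spectrum ℂ (a : B) := by
        simp [hspec, mul_add, hμ0, hu]
      rw [spectrum.notMem_iff, Algebra.algebraMap_eq_smul_one] at hmem
      rw [hfactor hu]
      exact hmem.smul (Units.mk0 (u * μ⁻¹) (mul_ne_zero hu (inv_ne_zero hμ0)))
  let f : ℂ → B := fun u => Ring.inverse (1 - u • q)
  have hf : Differentiable ℂ f := fun u => by
    have hlin : DifferentiableAt ℂ (fun v : ℂ => 1 - v • q) u := by fun_prop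
    exact (differentiableAt_inverse (𝕜 := ℂ) (hunit u)).comp u hlin
  have hbound (u : ℂ) : ‖f u‖ ≤ 12 * M := by
    refine norm_le_of_forall_abs_norm_one_add_inv_mul_le hf (fun v hv => ?_) u
    have hR : ((μ * (1 + v⁻¹)) • (1 : B) - a) * ((v * μ⁻¹) • f v) = 1 := by
      rw [mul_smul_comm, ← smul_mul_assoc, ← hfactor hv]
      exact Ring.mul_inverse_cancel _ (hunit v)
    simpa [norm_smul, hμ1] using abs_norm_sub_one_mul_norm_le_of_zpow_bounded a hM hR
  have hconst : f 1 = f 0 := hf.apply_eq_apply_of_bounded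
    (isBounded_iff_forall_norm_le.mpr ⟨12 * M, by rintro _ ⟨u, rfl⟩; exact hbound u⟩) 1 0
  have hone := Ring.mul_inverse_cancel _ (hunit 1)
  rw [show Ring.inverse (1 - (1 : ℂ) • q) = 1 by simpa [f] using hconst] at hone
  have hq0 : μ⁻¹ • (a : B) = 1 := by simpa [hq, sub_eq_zero] using hone
  rw [← hq0, smul_inv_smul₀ hμ0]
end

section
/- Let X be a complex Banach space, let T : X → X be a power-bounded operator, and let λ be an isolated point of the spectrum σ(T). Then λ is an eigenvalue of T: there exists x ∈ X with x ≠ 0 and T x = λ x. -/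
open Filter Topology Metric

/-- A right inverse of `1 - v • b` is controlled by the Neumann series when `‖v‖ < 1` and the
powers of `b` are bounded. -/
theorem norm_mul_one_sub_le_of_one_sub_smul_mul_eq_one
    {A : Type*} [NormedRing A] [NormedAlgebra ℂ A] [CompleteSpace A]
    {b r : A} {v : ℂ} {M : ℝ} (hb : ∀ n : ℕ, ‖b ^ n‖ ≤ M) (hv : ‖v‖ < 1)
    (hr : (1 - v • b) * r = 1) : ‖r‖ * (1 - ‖v‖) ≤ M := by
  have hbound : ∀ n : ℕ, ‖(v • b) ^ n‖ ≤ M * ‖v‖ ^ n := fun n => by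
    rw [smul_pow, norm_smul, norm_pow, mul_comm]
    gcongr
    exact hb n
  have hgeom : HasSum (fun n : ℕ => M * ‖v‖ ^ n) (M * (1 - ‖v‖)⁻¹) :=
    (hasSum_geometric_of_lt_one (norm_nonneg v) hv).mul_left M
  have hsum : Summable fun n : ℕ => (v • b) ^ n := .of_norm_bounded hgeom.summable hbound
  have hr_eq : r = ∑' n : ℕ, (v • b) ^ n :=
    (left_inv_eq_right_inv hsum.tsum_pow_mul_one_sub hr).symm
  have hle : ‖r‖ ≤ M * (1 - ‖v‖)⁻¹ := hr_eq ▸ tsum_of_norm_bounded hgeom hbound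
  rwa [← div_eq_mul_inv, le_div_iff₀ (by linarith)] at hle

theorem sub_mul_resolvent {A : Type*} [Ring A] [Algebra ℂ A] {a : A} {w : ℂ}
    (hw : w ∈ resolventSet ℂ a) : (algebraMap ℂ A w - a) * resolvent a w = 1 :=
  Ring.mul_inverse_cancel _ hw

theorem resolvent_mul_sub {A : Type*} [Ring A] [Algebra ℂ A] {a : A} {w : ℂ}
    (hw : w ∈ resolventSet ℂ a) : resolvent a w * (algebraMap ℂ A w - a) = 1 :=
  Ring.inverse_mul_cancel _ hw

/-- The resolvent of a power-bounded element grows at most like the inverse of the distance to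
the unit circle. -/
theorem norm_resolvent_mul_abs_norm_sub_one_le
    {A : Type*} [NormedRing A] [NormedAlgebra ℂ A] [CompleteSpace A]
    {T : Aˣ} {M : ℝ} (hM : ∀ n : ℤ, ‖((T ^ n : Aˣ) : A)‖ ≤ M)
    {w : ℂ} (hw : w ∈ resolventSet ℂ (T : A)) :
    ‖resolvent (T : A) w‖ * |‖w‖ - 1| ≤ M + M * M := by
  have hM0 : 0 ≤ M := (norm_nonneg _).trans (hM 0)
  have hR := sub_mul_resolvent hw
  set R := resolvent (T : A) w
  rcases lt_trichotomy ‖w‖ 1 with h | h | h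
  · have hpow : ∀ n : ℕ, ‖((T⁻¹ : Aˣ) : A) ^ n‖ ≤ M := fun n => by
      simpa using hM (-n)
    have hinv : (1 - w • ((T⁻¹ : Aˣ) : A)) * (-(T * R)) = 1 := by
      refine Eq.trans ?_ hR
      rw [Algebra.algebraMap_eq_smul_one]
      simp only [sub_mul, mul_neg, smul_mul_assoc, one_mul, Units.inv_mul_cancel_left]
      abel
    have hTR := norm_mul_one_sub_le_of_one_sub_smul_mul_eq_one hpow h hinv
    rw [norm_neg] at hTR
    have hRle : ‖R‖ ≤ M * ‖(T : A) * R‖ := by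
      calc ‖R‖ = ‖((T⁻¹ : Aˣ) : A) * (T * R)‖ := by rw [Units.inv_mul_cancel_left]
        _ ≤ ‖((T⁻¹ : Aˣ) : A)‖ * ‖(T : A) * R‖ := norm_mul_le _ _
        _ ≤ M * ‖(T : A) * R‖ := by
          gcongr
          simpa using hM (-1)
    rw [abs_of_neg (by linarith)]
    calc ‖R‖ * -(‖w‖ - 1) ≤ M * ‖(T : A) * R‖ * -(‖w‖ - 1) := by
          gcongr
          linarith
      _ = M * (‖(T : A) * R‖ * (1 - ‖w‖)) := by ring
      _ ≤ M * M := by gcongr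
      _ ≤ M + M * M := by linarith
  · rw [h]
    simp only [sub_self, abs_zero, mul_zero]
    positivity
  · have hw0 : w ≠ 0 := norm_pos_iff.mp (by linarith)
    have hpow : ∀ n : ℕ, ‖(T : A) ^ n‖ ≤ M := fun n => by simpa using hM n
    have hinv : (1 - w⁻¹ • (T : A)) * (w • R) = 1 := by
      refine Eq.trans ?_ hR
      rw [Algebra.algebraMap_eq_smul_one]
      simp only [sub_mul, smul_mul_assoc, one_mul, mul_smul_comm, smul_sub, smul_smul,
        mul_inv_cancel₀ hw0, one_smul]
    have hwR := norm_mul_one_sub_le_of_one_sub_smul_mul_eq_one hpow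
      (by rw [norm_inv]; exact inv_lt_one_of_one_lt₀ h) hinv
    rw [norm_smul, norm_inv] at hwR
    have hw' : ‖w‖ ≠ 0 := norm_ne_zero_iff.mpr hw0
    have heq : ‖w‖ * ‖R‖ * (1 - ‖w‖⁻¹) = ‖R‖ * (‖w‖ - 1) := by
      field_simp
    rw [abs_of_pos (by linarith), ← heq]
    nlinarith

/-- On the circle of centre `z` and radius `s`, the function `(w - z) * (‖w‖ ^ 2 - 1)` agrees with
a polynomial in `w`. -/
theorem sub_mul_norm_sq_sub_one_eq_of_mem_sphere {z w : ℂ} {s : ℝ} (hw : w ∈ sphere z s) :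
    w * (starRingEnd ℂ) z * (w - z) + s ^ 2 * w - (w - z) = (w - z) * ((‖w‖ : ℂ) ^ 2 - 1) := by
  have h₁ : (w - z) * (starRingEnd ℂ) (w - z) = (s : ℂ) ^ 2 := by
    rw [Complex.mul_conj', ← dist_eq_norm, mem_sphere.mp hw]
  rw [← Complex.mul_conj', ← h₁, map_sub]
  ring

/-- A function holomorphic near a closed disc whose growth is controlled by the inverse distance
to the unit circle is controlled at the centre of the disc by the inverse radius. -/
theorem radius_mul_norm_le_of_norm_mul_abs_norm_sub_one_le
    {E : Type*} [NormedAddCommGroup E] [NormedSpace ℂ E] {f : ℂ → E} {z : ℂ} {s C L : ℝ}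
    (hs : 0 < s) (hd : ∀ w ∈ closedBall z s, DifferentiableAt ℂ f w)
    (hf : ∀ w ∈ closedBall z s, ‖f w‖ * |‖w‖ - 1| ≤ C)
    (hL : ∀ w ∈ closedBall z s, ‖w‖ ≤ L) :
    s * ‖z‖ * ‖f z‖ ≤ C * (L + 1) := by
  have hC : 0 ≤ C := (by positivity : (0 : ℝ) ≤ _).trans (hf z (mem_closedBall_self hs.le))
  set g : ℂ → E := fun w =>
    (w * (starRingEnd ℂ) z * (w - z) + s ^ 2 * w - (w - z)) • f w with hg
  have hgd : DiffContOnCl ℂ g (ball z s) := by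
    apply DifferentiableOn.diffContOnCl
    rw [closure_ball z hs.ne']
    intro w hw
    have := hd w hw
    exact DifferentiableAt.differentiableWithinAt (by fun_prop)
  have hgb : ∀ w ∈ frontier (ball z s), ‖g w‖ ≤ s * (C * (L + 1)) := by
    intro w hw
    rw [frontier_ball z hs.ne'] at hw
    have hw' := sphere_subset_closedBall hw
    have hfac : ‖((‖w‖ : ℂ) ^ 2 - 1)‖ = |‖w‖ - 1| * (‖w‖ + 1) := by
      have : ((‖w‖ : ℂ) ^ 2 - 1) = (((‖w‖ - 1) * (‖w‖ + 1) : ℝ) : ℂ) := by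
        push_cast
        ring
      rw [this, Complex.norm_real, Real.norm_eq_abs, abs_mul,
        abs_of_pos (by positivity : 0 < ‖w‖ + 1)]
    rw [hg]
    simp only
    rw [sub_mul_norm_sq_sub_one_eq_of_mem_sphere hw, norm_smul, norm_mul, hfac,
      ← dist_eq_norm, mem_sphere.mp hw]
    calc s * (|‖w‖ - 1| * (‖w‖ + 1)) * ‖f w‖ = s * (‖f w‖ * |‖w‖ - 1| * (‖w‖ + 1)) := by ring
      _ ≤ s * (C * (L + 1)) := by
        gcongr
        · exact hf w hw'
        · exact hL w hw'
  have hz := Complex.norm_le_of_forall_mem_frontier_norm_le isBounded_ball hgd hgb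
    (subset_closure (mem_ball_self hs))
  have hgz : ‖g z‖ = s * (s * ‖z‖ * ‖f z‖) := by
    simp only [hg, sub_self, mul_zero, zero_add, sub_zero, norm_smul, norm_mul, norm_pow,
      Complex.norm_real, Real.norm_eq_abs, abs_of_pos hs]
    ring
  rw [hgz] at hz
  exact le_of_mul_le_mul_left hz hs

/-- Near an isolated nonzero point `μ`, the resolvent of a power-bounded element is
`O((z - μ)⁻¹)`. -/
theorem isBoundedUnder_sub_smul_resolvent
    {A : Type*} [NormedRing A] [NormedAlgebra ℂ A] [CompleteSpace A]
    {T : Aˣ} {M : ℝ} (hM : ∀ n : ℤ, ‖((T ^ n : Aˣ) : A)‖ ≤ M) {μ : ℂ} (hμ : μ ≠ 0)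
    (hiso : ∀ᶠ z in 𝓝[≠] μ, z ∈ resolventSet ℂ (T : A)) :
    IsBoundedUnder (· ≤ ·) (𝓝[≠] μ) fun z => ‖(z - μ) • resolvent (T : A) z‖ := by
  obtain ⟨δ, hδ, hball⟩ := Metric.eventually_nhds_iff_ball.mp (eventually_nhdsWithin_iff.mp hiso)
  have hμ' : 0 < ‖μ‖ := norm_pos_iff.mpr hμ
  set ε := min (δ / 2) (‖μ‖ / 2)
  have hε : 0 < ε := by positivity
  refine ⟨4 * ((M + M * M) * (‖μ‖ + δ + 1)) / ‖μ‖, ?_⟩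
  rw [eventually_map]
  filter_upwards [self_mem_nhdsWithin, mem_nhdsWithin_of_mem_nhds (ball_mem_nhds μ hε)] with z hne hz
  rw [mem_ball, dist_eq_norm] at hz
  have hzδ : ‖z - μ‖ < δ / 2 := hz.trans_le (min_le_left _ _)
  have hzμ : ‖z - μ‖ < ‖μ‖ / 2 := hz.trans_le (min_le_right _ _)
  have hpos : 0 < ‖z - μ‖ := norm_pos_iff.mpr (sub_ne_zero.mpr hne)
  have hclose : ∀ w ∈ closedBall z (‖z - μ‖ / 2), ‖w - μ‖ < δ ∧ w ≠ μ := by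
    intro w hw
    rw [mem_closedBall, dist_eq_norm] at hw
    constructor
    · linarith [norm_sub_le_norm_sub_add_norm_sub w z μ]
    · rintro rfl
      rw [norm_sub_rev] at hw
      linarith
  have hres : ∀ w ∈ closedBall z (‖z - μ‖ / 2), w ∈ resolventSet ℂ (T : A) := fun w hw =>
    hball w (by simpa [dist_eq_norm] using (hclose w hw).1) (hclose w hw).2
  have hmain := radius_mul_norm_le_of_norm_mul_abs_norm_sub_one_le (f := resolvent (T : A))
    (L := ‖μ‖ + δ) (half_pos hpos)
    (fun w hw => (spectrum.hasDerivAt_resolvent_const_left (hres w hw)).differentiableAt)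
    (fun w hw => norm_resolvent_mul_abs_norm_sub_one_le hM (hres w hw))
    (fun w hw => by linarith [(hclose w hw).1, norm_le_norm_add_norm_sub' w μ])
  have hzlow : ‖μ‖ / 2 ≤ ‖z‖ := by
    linarith [norm_le_norm_add_norm_sub' μ z, norm_sub_rev μ z]
  rw [norm_smul, le_div_iff₀ hμ']
  have hmul : ‖z - μ‖ * ‖resolvent (T : A) z‖ * (‖μ‖ / 2) ≤
      ‖z - μ‖ * ‖resolvent (T : A) z‖ * ‖z‖ := by gcongr
  linarith

/-- At an isolated spectral point of a power-bounded element `T`, some nonzero element is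
annihilated by `μ - T` on the left. -/
theorem exists_ne_zero_sub_mul_eq_zero
    {A : Type*} [NormedRing A] [NormedAlgebra ℂ A] [CompleteSpace A]
    {T : Aˣ} {M : ℝ} (hM : ∀ n : ℤ, ‖((T ^ n : Aˣ) : A)‖ ≤ M) {μ : ℂ}
    (hμ : μ ∈ spectrum ℂ (T : A)) (hiso : ∀ᶠ z in 𝓝[≠] μ, z ∈ resolventSet ℂ (T : A)) :
    ∃ F : A, F ≠ 0 ∧ (algebraMap ℂ A μ - T) * F = 0 := by
  have hμ0 : μ ≠ 0 := by
    rintro rfl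
    exact spectrum.zero_notMem_iff ℂ |>.mpr T.isUnit hμ
  have hdR : ∀ᶠ z in 𝓝[≠] μ, DifferentiableAt ℂ (resolvent (T : A)) z :=
    hiso.mono fun z hz => (spectrum.hasDerivAt_resolvent_const_left hz).differentiableAt
  have hdF : ∀ᶠ z in 𝓝[≠] μ, DifferentiableAt ℂ (fun z => (z - μ) • resolvent (T : A) z) z :=
    hdR.mono fun z hz => by fun_prop
  have hid : Tendsto (fun z : ℂ => z) (𝓝[≠] μ) (𝓝 μ) := tendsto_id.mono_left nhdsWithin_le_nhds
  have hsub : Tendsto (fun z => algebraMap ℂ A z - T) (𝓝[≠] μ) (𝓝 (algebraMap ℂ A μ - T)) :=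
    ((continuous_algebraMap ℂ A).continuousAt.tendsto.comp hid).sub_const _
  have hF := Complex.tendsto_limUnder_of_differentiable_on_punctured_nhds_of_bounded_under hdF
    (by simpa using isBoundedUnder_sub_smul_resolvent hM hμ0 hiso)
  set F := limUnder (𝓝[≠] μ) fun z => (z - μ) • resolvent (T : A) z
  refine ⟨F, fun hF0 => ?_, ?_⟩
  · rw [hF0] at hF
    have hinv : Tendsto (fun z : ℂ => z - μ) (𝓝[≠] μ) (𝓝 0) := by
      simpa using hid.sub_const μ
    have hR := Complex.tendsto_limUnder_of_differentiable_on_punctured_nhds_of_isLittleO hdR (by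
      have hzero : resolvent (T : A) μ = 0 := Ring.inverse_non_unit _ hμ
      simp only [hzero, sub_zero]
      rw [Asymptotics.isLittleO_iff]
      intro c hc
      filter_upwards [self_mem_nhdsWithin, hF.norm.eventually_le_const (by simpa using hc)]
        with z hne hz
      have hpos : 0 < ‖z - μ‖ := norm_pos_iff.mpr (sub_ne_zero.mpr hne)
      rw [norm_inv, ← div_eq_mul_inv, le_div_iff₀ hpos, mul_comm, ← norm_smul]
      exact hz)
    set L := limUnder (𝓝[≠] μ) (resolvent (T : A))
    have hr : (algebraMap ℂ A μ - T) * L = 1 :=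
      tendsto_nhds_unique (hsub.mul hR) (tendsto_const_nhds.congr' (by
        filter_upwards [hiso] with z hz using (sub_mul_resolvent hz).symm))
    have hl : L * (algebraMap ℂ A μ - T) = 1 :=
      tendsto_nhds_unique (hR.mul hsub) (tendsto_const_nhds.congr' (by
        filter_upwards [hiso] with z hz using (resolvent_mul_sub hz).symm))
    exact hμ ⟨⟨_, L, hr, hl⟩, rfl⟩
  · have hlim : Tendsto (fun z => (z - μ) • (1 : A)) (𝓝[≠] μ) (𝓝 0) := by
      simpa using (hid.sub_const μ).smul_const (1 : A)
    refine tendsto_nhds_unique (hsub.mul hF) (hlim.congr' ?_)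
    filter_upwards [hiso] with z hz
    rw [mul_smul_comm, sub_mul_resolvent hz]

/-- An isolated point of the spectrum of a power-bounded operator on a complex
Banach space is an eigenvalue. -/
theorem isolated_spectrum_is_eigenvalue
    {X : Type*} [NormedAddCommGroup X] [NormedSpace ℂ X] [CompleteSpace X]
    (T : (X →L[ℂ] X)ˣ)
    (hpb : ∃ M : ℝ, ∀ n : ℤ, ‖((T ^ n : (X →L[ℂ] X)ˣ) : X →L[ℂ] X)‖ ≤ M)
    (μ : ℂ) (hμ : μ ∈ spectrum ℂ (T : X →L[ℂ] X))
    (hiso : ∃ U : Set ℂ, IsOpen U ∧ U ∩ spectrum ℂ (T : X →L[ℂ] X) = {μ}) :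
    ∃ x : X, x ≠ 0 ∧ (T : X →L[ℂ] X) x = μ • x := by
  obtain ⟨M, hM⟩ := hpb
  obtain ⟨U, hU, hUμ⟩ := hiso
  have hμU : μ ∈ U := (hUμ.ge (Set.mem_singleton μ)).1
  have hpunct : ∀ᶠ z in 𝓝[≠] μ, z ∈ resolventSet ℂ (T : X →L[ℂ] X) := by
    filter_upwards [self_mem_nhdsWithin, mem_nhdsWithin_of_mem_nhds (hU.mem_nhds hμU)]
      with z hne hzU
    by_contra hz
    exact hne (hUμ.le ⟨hzU, hz⟩)
  obtain ⟨F, hF, hTF⟩ := exists_ne_zero_sub_mul_eq_zero hM hμ hpunct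
  obtain ⟨y, hy⟩ := DFunLike.ne_iff.mp hF
  refine ⟨F y, hy, ?_⟩
  have hy' := DFunLike.congr_fun hTF y
  simp only [Algebra.algebraMap_eq_smul_one, mul_apply_eq_comp, sub_apply, smul_apply,
    one_apply_eq_self, zero_apply] at hy'
  exact (sub_eq_zero.mp hy').symm
end

section
/- Let X be a complex Banach space and let T ∈ B(X) be a power-bounded operator whose spectrum is a finite set σ(T) = {λ₁, ..., λ_m} of m distinct complex numbers. Then T is an algebraic operator satisfying ∏_{j=1}^m (T − λⱼ I) = 0. -/
open Filter Topology Metric Set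

/-- A function holomorphic off a finite set, with `f z = o((z - c)⁻¹)` at each exceptional point `c`
and vanishing at infinity, is zero off the exceptional set. -/
theorem eq_zero_of_finite_singularities {E : Type*} [NormedAddCommGroup E] [NormedSpace ℂ E]
    [CompleteSpace E] {f : ℂ → E} {s : Set ℂ} (hs : s.Finite)
    (hd : ∀ z ∉ s, DifferentiableAt ℂ f z)
    (ho : ∀ c ∈ s, Tendsto (fun z => (z - c) • f z) (𝓝[≠] c) (𝓝 0))
    (hf : Tendsto f (cocompact ℂ) (𝓝 0)) {z : ℂ} (hz : z ∉ s) : f z = 0 := by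
  set g : ℂ → E := fun c => limUnder (𝓝[≠] c) f with hg
  have hgf : ∀ z ∉ s, g z = f z := fun z hz =>
    ((hd z hz).continuousAt.tendsto.mono_left nhdsWithin_le_nhds).limUnder_eq
  have hpunct : ∀ c : ℂ, ∀ᶠ z in 𝓝[≠] c, z ∉ s := fun c => by
    have h : (s \ {c})ᶜ ∈ 𝓝 c := (hs.subset sdiff_subset).isClosed.isOpen_compl.mem_nhds (by simp)
    filter_upwards [mem_nhdsWithin_of_mem_nhds h, self_mem_nhdsWithin] with z hz hzc hzs
    exact hz ⟨hzs, hzc⟩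
  have hgd : Differentiable ℂ g := by
    intro c
    have hlim : Tendsto (fun z => (z - c) • f z) (𝓝[≠] c) (𝓝 0) := by
      by_cases hc : c ∈ s
      · exact ho c hc
      · have h : ContinuousAt (fun z => (z - c) • f z) c :=
          (continuousAt_id.sub continuousAt_const).smul (hd c hc).continuousAt
        simpa [ContinuousAt] using h.tendsto.mono_left (nhdsWithin_le_nhds (s := {c}ᶜ))
    have hlittle : (fun z => f z - f c) =o[𝓝[≠] c] fun z => (z - c)⁻¹ := by
      have hconst : Tendsto (fun z => (z - c) • f c) (𝓝[≠] c) (𝓝 0) := by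
        have h : Continuous fun z => (z - c) • f c := by fun_prop
        simpa using (h.tendsto c).mono_left (nhdsWithin_le_nhds (s := {c}ᶜ))
      have h := (Asymptotics.isBigO_refl (fun z : ℂ => (z - c)⁻¹) (𝓝[≠] c)).smul_isLittleO
        ((Asymptotics.isLittleO_one_iff ℂ).2 (by simpa using hlim.sub hconst))
      refine h.congr' ?_ (by simp)
      filter_upwards [self_mem_nhdsWithin] with z hz
      rw [← smul_sub, inv_smul_smul₀ (sub_ne_zero.2 hz)]
    have hu := (Complex.differentiableOn_update_limUnder_insert_of_isLittleO (hpunct c)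
      (fun z hz => (hd z hz).differentiableWithinAt) hlittle).differentiableAt
      (insert_mem_nhds_iff.2 (hpunct c))
    refine hu.congr_of_eventuallyEq ?_
    filter_upwards [eventually_nhdsWithin_iff.1 (hpunct c)] with z hz
    rcases eq_or_ne z c with rfl | hzc
    · simp [hg]
    · rw [Function.update_of_ne hzc, hgf z (hz hzc)]
  have hg0 : Tendsto g (cocompact ℂ) (𝓝 0) := by
    refine hf.congr' ?_
    filter_upwards [hs.isCompact.compl_mem_cocompact] with z hz
    exact (hgf z hz).symm
  rw [← hgf z hz]
  exact hgd.apply_eq_of_tendsto_cocompact z hg0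

/-- On the circle `‖z - c‖ = r` around a unimodular `c`, the quadratic `(z - c)² + r² c z` vanishes
exactly on the unit circle. -/
theorem norm_sq_add_mul_eq_of_norm_eq_one {c z : ℂ} (hc : ‖c‖ = 1) :
    ‖(z - c) ^ 2 + (‖z - c‖ : ℂ) ^ 2 * c * z‖ = ‖z - c‖ * |‖z‖ ^ 2 - 1| := by
  have h1 : c * (starRingEnd ℂ) c = 1 := by simp [Complex.mul_conj', hc]
  have h : (z - c) ^ 2 + (‖z - c‖ : ℂ) ^ 2 * c * z = (z - c) * c * ((‖z‖ ^ 2 - 1 : ℝ) : ℂ) := by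
    push_cast
    rw [← Complex.mul_conj', ← Complex.mul_conj', map_sub]
    linear_combination -(z - c) * z * h1
  rw [h, norm_mul, norm_mul, hc, mul_one, Complex.norm_real, Real.norm_eq_abs]

/-- A holomorphic function on a punctured disc around a point `c` of the unit circle growing at most
like the inverse distance to the unit circle satisfies `f z = O((z - c)⁻²)`. -/
theorem exists_norm_sq_smul_le_of_norm_mul_le {E : Type*} [NormedAddCommGroup E] [NormedSpace ℂ E]
    {f : ℂ → E} {c : ℂ} (hc : ‖c‖ = 1) {ρ : ℝ}
    (hd : ∀ z, z ≠ c → ‖z - c‖ ≤ ρ → DifferentiableAt ℂ f z) {K : ℝ}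
    (hK : ∀ z, z ≠ c → ‖z - c‖ ≤ ρ → |‖z‖ ^ 2 - 1| * ‖f z‖ ≤ K) :
    ∃ C, ∀ z, z ≠ c → ‖z - c‖ < ρ → ‖(z - c) ^ 2 • f z‖ ≤ C := by
  rcases le_or_gt ρ 0 with hρ | hρ
  · exact ⟨0, fun z _ hz => absurd (norm_nonneg (z - c)) (by linarith)⟩
  obtain ⟨B, hB⟩ : ∃ B, ∀ z ∈ sphere c ρ, ‖f z‖ ≤ B :=
    (isCompact_sphere c ρ).exists_bound_of_continuousOn fun z hz => by
      have hz' : ‖z - c‖ = ρ := by simpa [dist_eq_norm] using hz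
      refine (hd z ?_ hz'.le).continuousAt.continuousWithinAt
      rintro rfl
      simp at hz'
      linarith
  refine ⟨max (ρ * K) ((ρ ^ 2 + ρ ^ 2 * (1 + ρ)) * B), fun z hzc hzρ => ?_⟩
  have hz0 : 0 < ‖z - c‖ := norm_pos_iff.2 (sub_ne_zero.2 hzc)
  have key : ∀ r ∈ Ioo 0 ‖z - c‖, ‖((z - c) ^ 2 + (r : ℂ) ^ 2 * c * z) • f z‖ ≤
      max (ρ * K) ((ρ ^ 2 + ρ ^ 2 * (1 + ρ)) * B) := by
    rintro r ⟨hr0, hrz⟩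
    set U : Set ℂ := ball c ρ \ closedBall c r
    have hUopen : IsOpen U := isOpen_ball.sdiff isClosed_closedBall
    have hclosure : closure U ⊆ closedBall c ρ \ ball c r := by
      refine closure_minimal (sdiff_subset_sdiff ball_subset_closedBall ball_subset_closedBall) ?_
      exact isClosed_closedBall.sdiff isOpen_ball
    have hdU : DiffContOnCl ℂ (fun w => ((w - c) ^ 2 + (r : ℂ) ^ 2 * c * w) • f w) U := by
      refine DifferentiableOn.diffContOnCl fun w hw => DifferentiableAt.differentiableWithinAt ?_
      have hw' := hclosure hw
      have hwc : w ≠ c := by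
        rintro rfl
        exact hw'.2 (mem_ball_self hr0)
      have := hd w hwc (by simpa [dist_eq_norm] using hw'.1)
      fun_prop
    refine Complex.norm_le_of_forall_mem_frontier_norm_le
      (f := fun w => ((w - c) ^ 2 + (r : ℂ) ^ 2 * c * w) • f w)
      (isBounded_ball.subset sdiff_subset) hdU (fun w hw => ?_) (subset_closure ?_)
    · have hw1 := hclosure hw.1
      have hw2 : w ∉ U := fun h => hw.2 (hUopen.interior_eq.symm ▸ h)
      have hle : ‖w - c‖ ≤ ρ := by simpa [dist_eq_norm] using hw1.1
      have hge : r ≤ ‖w - c‖ := by simpa [dist_eq_norm] using hw1.2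
      have hwc : w ≠ c := by
        rintro rfl
        exact hw1.2 (mem_ball_self hr0)
      rcases hge.eq_or_lt with hr | hr
      · refine le_max_of_le_left ?_
        rw [norm_smul, hr, norm_sq_add_mul_eq_of_norm_eq_one hc, mul_assoc]
        exact mul_le_mul hle (hK w hwc hle) (by positivity) hρ.le
      · have hρw : ‖w - c‖ = ρ := by
          refine hle.antisymm (not_lt.1 fun hlt => hw2 ⟨?_, ?_⟩)
          · simpa [dist_eq_norm] using hlt
          · simpa [dist_eq_norm] using hr
        refine le_max_of_le_right ?_
        rw [norm_smul]
        refine mul_le_mul ?_ (hB w (by simpa [dist_eq_norm] using hρw)) (norm_nonneg _)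
          (by positivity)
        have hwn : ‖w‖ ≤ 1 + ρ := by
          calc ‖w‖ = ‖c + (w - c)‖ := by simp
            _ ≤ 1 + ρ := (norm_add_le _ _).trans (by rw [hc, hρw])
        refine (norm_add_le _ _).trans ?_
        rw [norm_pow, hρw, norm_mul, norm_mul, hc, mul_one, norm_pow, Complex.norm_real,
          Real.norm_of_nonneg hr0.le]
        gcongr
        linarith
    · exact ⟨by simpa [dist_eq_norm] using hzρ, by simpa [dist_eq_norm] using hrz⟩
  have hcont : Continuous fun r : ℝ => ‖((z - c) ^ 2 + (r : ℂ) ^ 2 * c * z) • f z‖ := by fun_prop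
  have hlim := (hcont.tendsto 0).mono_left (nhdsWithin_le_nhds (s := Ioi 0))
  simp only [Complex.ofReal_zero, ne_eq, OfNat.ofNat_ne_zero, not_false_eq_true, zero_pow,
    zero_mul, add_zero] at hlim
  refine le_of_tendsto hlim ?_
  filter_upwards [Ioo_mem_nhdsGT hz0] with r hr using key r hr

/-- Under the hypotheses of `exists_norm_sq_smul_le_of_norm_mul_le`, in fact
`f z = o((z - c)⁻²)`. -/
theorem tendsto_sq_smul_of_norm_mul_le {E : Type*} [NormedAddCommGroup E] [NormedSpace ℂ E]
    [CompleteSpace E] {f : ℂ → E} {c : ℂ} (hc : ‖c‖ = 1) {ρ : ℝ} (hρ : 0 < ρ)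
    (hd : ∀ z, z ≠ c → ‖z - c‖ ≤ ρ → DifferentiableAt ℂ f z) {K : ℝ}
    (hK : ∀ z, z ≠ c → ‖z - c‖ ≤ ρ → |‖z‖ ^ 2 - 1| * ‖f z‖ ≤ K) :
    Tendsto (fun z => (z - c) ^ 2 • f z) (𝓝[≠] c) (𝓝 0) := by
  obtain ⟨C, hC⟩ := exists_norm_sq_smul_le_of_norm_mul_le hc hd hK
  have hball : ∀ᶠ z in 𝓝[≠] c, z ≠ c ∧ ‖z - c‖ < ρ := by
    filter_upwards [mem_nhdsWithin_of_mem_nhds (ball_mem_nhds c hρ), self_mem_nhdsWithin]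
      with z hz hzc
    exact ⟨hzc, by simpa [dist_eq_norm] using hz⟩
  have hlim : Tendsto (fun z => (z - c) ^ 2 • f z) (𝓝[≠] c)
      (𝓝 (limUnder (𝓝[≠] c) fun z => (z - c) ^ 2 • f z)) := by
    refine Complex.tendsto_limUnder_of_differentiable_on_punctured_nhds_of_bounded_under ?_ ?_
    · filter_upwards [hball] with z hz
      have := hd z hz.1 hz.2.le
      fun_prop
    · refine isBoundedUnder_of_eventually_le (a := C) ?_
      filter_upwards [hball] with z hz
      simpa using hC z hz.1 hz.2
  have hpath : Tendsto (fun t : ℝ => (1 + t : ℂ) * c) (𝓝[>] 0) (𝓝[≠] c) := by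
    have hc0 : c ≠ 0 := fun h => by simp [h] at hc
    refine tendsto_nhdsWithin_iff.2 ⟨?_, ?_⟩
    · have h : Continuous fun t : ℝ => (1 + t : ℂ) * c := by fun_prop
      simpa using (h.tendsto 0).mono_left (nhdsWithin_le_nhds (s := Ioi 0))
    · filter_upwards [self_mem_nhdsWithin] with t ht
      have ht : (0 : ℝ) < t := ht
      simp [add_mul, hc0, ht.ne']
  have hzero : Tendsto (fun t : ℝ => ((1 + t : ℂ) * c - c) ^ 2 • f ((1 + t : ℂ) * c)) (𝓝[>] 0)
      (𝓝 0) := by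
    have hbound : Tendsto (fun t : ℝ => t * K) (𝓝[>] 0) (𝓝 0) := by
      have h : Continuous fun t : ℝ => t * K := by fun_prop
      simpa using (h.tendsto 0).mono_left (nhdsWithin_le_nhds (s := Ioi 0))
    refine squeeze_zero_norm' ?_ hbound
    filter_upwards [self_mem_nhdsWithin, hpath.eventually hball] with t ht hb
    have ht : (0 : ℝ) < t := ht
    have hnorm : ‖(1 + t : ℂ) * c‖ = 1 + t := by
      rw [norm_mul, hc, mul_one, ← Complex.ofReal_one, ← Complex.ofReal_add, Complex.norm_real,
        Real.norm_of_nonneg (by linarith)]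
    have hKt := hK _ hb.1 hb.2.le
    rw [hnorm, abs_of_nonneg (by nlinarith)] at hKt
    have hsub : (1 + t : ℂ) * c - c = t * c := by ring
    rw [norm_smul, hsub, norm_pow, norm_mul, hc, mul_one, Complex.norm_real,
      Real.norm_of_nonneg ht.le]
    have hf0 := norm_nonneg (f ((1 + t : ℂ) * c))
    have hle : t * ‖f ((1 + t : ℂ) * c)‖ ≤ K := by
      nlinarith [mul_nonneg ht.le hf0, mul_nonneg (sq_nonneg t) hf0]
    rw [sq, mul_assoc]
    gcongr
  exact tendsto_nhds_unique (hlim.comp hpath) hzero ▸ hlim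

section PowerBounded

variable {A : Type*} [NormedRing A] [NormedAlgebra ℂ A] {u : Aˣ} {M : ℝ}

theorem norm_le_one_of_mem_spectrum_of_norm_pow_le [CompleteSpace A] {a : A}
    (hM : ∀ n : ℕ, ‖a ^ n‖ ≤ M) {c : ℂ}
    (hc : c ∈ spectrum ℂ a) : ‖c‖ ≤ 1 := by
  by_contra! h
  obtain ⟨n, hn⟩ := pow_unbounded_of_one_lt (M * ‖(1 : A)‖) h
  have h1 := spectrum.norm_le_norm_mul_of_mem (spectrum.pow_mem_pow a n hc)
  rw [norm_pow] at h1
  have h2 := mul_le_mul_of_nonneg_right (hM n) (norm_nonneg (1 : A))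
  linarith

theorem norm_eq_one_of_mem_spectrum_of_norm_zpow_le [CompleteSpace A]
    (hM : ∀ n : ℤ, ‖((u ^ n : Aˣ) : A)‖ ≤ M) {c : ℂ} (hc : c ∈ spectrum ℂ (u : A)) :
    ‖c‖ = 1 := by
  have hc0 : c ≠ 0 := by
    rintro rfl
    exact hc (spectrum.zero_mem_resolventSet_of_unit u)
  refine le_antisymm (norm_le_one_of_mem_spectrum_of_norm_pow_le (M := M)
    (fun n => by simpa using hM n) hc) ?_
  have h := norm_le_one_of_mem_spectrum_of_norm_pow_le (a := (↑u⁻¹ : A)) (M := M)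
    (fun n => by
      rw [← Units.val_pow_eq_pow_val, inv_pow, ← zpow_natCast, ← zpow_neg]
      exact hM _)
    (spectrum.inv₀_mem_inv_iff.2 hc)
  rw [norm_inv] at h
  exact (inv_le_one₀ (norm_pos_iff.2 hc0)).1 h

/-- The resolvent of a doubly power-bounded element grows at most like the inverse distance to the
unit circle. -/
theorem abs_norm_sub_one_mul_norm_resolvent_le
    (hM : ∀ n : ℤ, ‖((u ^ n : Aˣ) : A)‖ ≤ M) {z : ℂ} (hz : z ∈ resolventSet ℂ (u : A)) :
    |‖z‖ - 1| * ‖resolvent (u : A) z‖ ≤ M := by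
  set R := resolvent (u : A) z
  set a : ℤ → ℝ := fun n => ‖((u ^ n : Aˣ) : A) * R‖ with ha
  have hR : (algebraMap ℂ A z - u) * R = 1 := Ring.mul_inverse_cancel _ hz
  have hrec : ∀ n : ℤ,
      z • (((u ^ n : Aˣ) : A) * R) - ((u ^ (n + 1) : Aˣ) : A) * R = ((u ^ n : Aˣ) : A) := by
    intro n
    calc _ = ((u ^ n : Aˣ) : A) * ((algebraMap ℂ A z - u) * R) := by
          rw [zpow_add_one, Units.val_mul, sub_mul, mul_sub, Algebra.algebraMap_eq_smul_one,
            smul_one_mul, mul_smul_comm, mul_assoc]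
      _ = _ := by rw [hR, mul_one]
  have hbdd : BddAbove (range a) := by
    refine ⟨M * ‖R‖, ?_⟩
    rintro _ ⟨n, rfl⟩
    exact (norm_mul_le _ _).trans (mul_le_mul_of_nonneg_right (hM n) (norm_nonneg _))
  set S := ⨆ n, a n
  have hS : ∀ n, a n ≤ S := le_ciSup hbdd
  have hdiff : ∀ n, |‖z‖ * a n - a (n + 1)| ≤ M := fun n => by
    have h := abs_norm_sub_norm_le (z • (((u ^ n : Aˣ) : A) * R)) (((u ^ (n + 1) : Aˣ) : A) * R)
    rw [hrec, norm_smul] at h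
    exact h.trans (hM n)
  have hRS : ‖R‖ ≤ S := by simpa [ha] using hS 0
  have hle : S ≤ M + ‖z‖ * S := ciSup_le fun n => by
    have h := (abs_le.1 (hdiff (n - 1))).1
    rw [sub_add_cancel] at h
    nlinarith [hS (n - 1), norm_nonneg z]
  have hge : ‖z‖ * S ≤ M + S := by
    rw [Real.mul_iSup_of_nonneg (norm_nonneg z)]
    exact ciSup_le fun n => by linarith [(abs_le.1 (hdiff n)).2, hS (n + 1)]
  refine (mul_le_mul_of_nonneg_left hRS (abs_nonneg _)).trans ?_
  rcases abs_cases (‖z‖ - 1) with ⟨h, -⟩ | ⟨h, -⟩ <;> rw [h] <;> linarith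

/-- A polynomial vanishing on the finite spectrum of a doubly power-bounded element annihilates
that element. -/
theorem aeval_eq_zero_of_finite_spectrum_of_norm_zpow_le [CompleteSpace A]
    (hM : ∀ n : ℤ, ‖((u ^ n : Aˣ) : A)‖ ≤ M) (hfin : (spectrum ℂ (u : A)).Finite)
    {p : Polynomial ℂ} (hp : ∀ c ∈ spectrum ℂ (u : A), p.eval c = 0) :
    Polynomial.aeval (u : A) p = 0 := by
  have hres : ∀ z ∉ spectrum ℂ (u : A), z ∈ resolventSet ℂ (u : A) := fun z hz => not_not.1 hz
  have hdiff : ∀ z ∉ spectrum ℂ (u : A), DifferentiableAt ℂ (resolvent (u : A)) z :=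
    fun z hz => (spectrum.hasDerivAt_resolvent_const_left (hres z hz)).differentiableAt
  obtain ⟨z₀, hz₀⟩ := hfin.infinite_compl.nonempty
  have hzero : Polynomial.aeval (u : A) p * resolvent (u : A) z₀ = 0 := by
    refine eq_zero_of_finite_singularities
      (f := fun z => Polynomial.aeval (u : A) p * resolvent (u : A) z) hfin
      (fun z hz => (hdiff z hz).const_mul _) (fun c hc => ?_) ?_ hz₀
    · have hc1 := norm_eq_one_of_mem_spectrum_of_norm_zpow_le hM hc
      obtain ⟨ρ, hρ, hball⟩ := nhds_basis_closedBall.mem_iff.1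
        ((hfin.subset (sdiff_subset (t := {c}))).isClosed.isOpen_compl.mem_nhds
          (show c ∈ (spectrum ℂ (u : A) \ {c})ᶜ by simp))
      have hmem : ∀ z, z ≠ c → ‖z - c‖ ≤ ρ → z ∉ spectrum ℂ (u : A) := fun z hzc hz hzs =>
        hball (mem_closedBall_iff_norm.2 hz) ⟨hzs, hzc⟩
      have hM0 : 0 ≤ M := (norm_nonneg _).trans (hM 0)
      have hlim : Tendsto (fun z => (z - c) ^ 2 • resolvent (u : A) z) (𝓝[≠] c) (𝓝 0) := by
        refine tendsto_sq_smul_of_norm_mul_le hc1 hρ (fun z hzc hz => hdiff z (hmem z hzc hz))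
          (K := M * (2 + ρ)) fun z hzc hz => ?_
        have hzn : ‖z‖ ≤ 1 + ρ := by
          calc ‖z‖ = ‖c + (z - c)‖ := by simp
            _ ≤ 1 + ρ := (norm_add_le _ _).trans (by rw [hc1]; gcongr)
        have hfac : |‖z‖ ^ 2 - 1| = |‖z‖ - 1| * (‖z‖ + 1) := by
          rw [← abs_of_nonneg (show 0 ≤ ‖z‖ + 1 by positivity), ← abs_mul]
          ring_nf
        calc |‖z‖ ^ 2 - 1| * ‖resolvent (u : A) z‖
            = |‖z‖ - 1| * ‖resolvent (u : A) z‖ * (‖z‖ + 1) := by rw [hfac]; ring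
          _ ≤ M * (2 + ρ) := mul_le_mul
              (abs_norm_sub_one_mul_norm_resolvent_le hM (hres z (hmem z hzc hz)))
              (by linarith) (by positivity) hM0
      obtain ⟨q, rfl⟩ := Polynomial.dvd_iff_isRoot.2 (hp c hc)
      set Q := Polynomial.aeval (u : A) q
      have hlin : Tendsto (fun z : ℂ => (z - c) • Q) (𝓝[≠] c) (𝓝 0) := by
        have h : Continuous fun z : ℂ => (z - c) • Q := by fun_prop
        simpa using (h.tendsto c).mono_left (nhdsWithin_le_nhds (s := {c}ᶜ))
      have hsum := (hlim.const_mul Q).sub hlin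
      rw [mul_zero, sub_zero] at hsum
      refine hsum.congr' ?_
      filter_upwards [mem_nhdsWithin_of_mem_nhds (closedBall_mem_nhds c hρ),
        self_mem_nhdsWithin] with z hz hzc
      have hR : (algebraMap ℂ A z - u) * resolvent (u : A) z = 1 :=
        Ring.mul_inverse_cancel _ (hres z (hmem z hzc (mem_closedBall_iff_norm.1 hz)))
      have hsplit : ((u : A) - algebraMap ℂ A c) * resolvent (u : A) z =
          (z - c) • resolvent (u : A) z - 1 := by
        rw [← hR, sub_mul, sub_mul, sub_smul, Algebra.algebraMap_eq_smul_one,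
          Algebra.algebraMap_eq_smul_one, smul_one_mul, smul_one_mul]
        abel
      rw [mul_comm (Polynomial.X - Polynomial.C c) q, map_mul, mul_assoc]
      simp only [map_sub, Polynomial.aeval_X, Polynomial.aeval_C]
      rw [hsplit, mul_sub, mul_one, smul_sub, mul_smul_comm, mul_smul_comm, smul_smul, sq]
    · simpa [Metric.cobounded_eq_cocompact] using
        (spectrum.resolvent_tendsto_cobounded (𝕜 := ℂ) (u : A)).const_mul
          (Polynomial.aeval (u : A) p)
  exact (spectrum.isUnit_resolvent.1 (hres z₀ hz₀)).mul_left_eq_zero.1 hzero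

end PowerBounded

/-- A power-bounded operator with finite spectrum {λ₁, …, λ_m} is algebraic:
∏ (T − λⱼ I) = 0. -/
theorem powerBounded_finite_spectrum_algebraic
    {X : Type*} [NormedAddCommGroup X] [NormedSpace ℂ X] [CompleteSpace X]
    (T : (X →L[ℂ] X)ˣ)
    (hpb : ∃ M : ℝ, ∀ n : ℤ, ‖((T ^ n : (X →L[ℂ] X)ˣ) : X →L[ℂ] X)‖ ≤ M)
    (m : ℕ) (μ : Fin m → ℂ) (hinj : Function.Injective μ)
    (hspec : spectrum ℂ (T : X →L[ℂ] X) = Set.range μ) :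
    (((List.finRange m).map
      (fun j => (T : X →L[ℂ] X) - μ j • (1 : X →L[ℂ] X))).prod = 0) := by
  obtain ⟨M, hM⟩ := hpb
  have h := aeval_eq_zero_of_finite_spectrum_of_norm_zpow_le hM (hspec ▸ finite_range μ)
    (p := ((List.finRange m).map fun j => Polynomial.X - Polynomial.C (μ j)).prod) (by
      rw [hspec]
      rintro _ ⟨j, rfl⟩
      rw [Polynomial.eval_list_prod, List.prod_eq_zero_iff]
      simp [sub_eq_zero])
  rw [map_list_prod, List.map_map] at h
  simpa [Function.comp_def, Algebra.algebraMap_eq_smul_one] using h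
end

section
/- Let B be a complex unital Banach algebra, let a ∈ B be invertible with sup_{n∈ℤ} ‖aⁿ‖ < ∞, and suppose σ(a) = {λ} is a singleton (so |λ| = 1). Then the element N = λ̄ a − e is quasinilpotent, i.e., σ(N) = {0}, and moreover N = 0. -/
/-- An entire function satisfying `|re z| * ‖f z‖ ≤ C * (1 + ‖z‖)` is bounded: multiply `f` by
`z ^ 2 + R ^ 2`, which has norm `2 * R * |re z|` on the circle of radius `R`, and apply the
maximum principle there. -/
lemma norm_le_of_abs_re_mul_norm_le {E : Type*} [NormedAddCommGroup E] [NormedSpace ℂ E]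
    {f : ℂ → E} (hf : Differentiable ℂ f) {C : ℝ}
    (hC : ∀ z, |z.re| * ‖f z‖ ≤ C * (1 + ‖z‖)) (z : ℂ) : ‖f z‖ ≤ 8 * C := by
  have hC0 : 0 ≤ C := by simpa using hC 0
  obtain ⟨R, hR1, hRz⟩ : ∃ R : ℝ, 1 ≤ R ∧ 2 * ‖z‖ ≤ R :=
    ⟨max 1 (2 * ‖z‖), le_max_left _ _, le_max_right _ _⟩
  have hR0 : 0 < R := by linarith
  have hmax : ‖(z ^ 2 + (R : ℂ) ^ 2) • f z‖ ≤ 2 * R * (C * (1 + R)) := by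
    refine Complex.norm_le_of_forall_mem_frontier_norm_le (U := Metric.ball 0 R)
      (f := fun w => (w ^ 2 + (R : ℂ) ^ 2) • f w) Metric.isBounded_ball
      (Differentiable.diffContOnCl (by fun_prop)) (fun w hw => ?_) ?_
    · rw [frontier_ball _ hR0.ne', mem_sphere_zero_iff_norm] at hw
      have hfac : w ^ 2 + (R : ℂ) ^ 2 = w * ((2 * w.re : ℝ) : ℂ) := by
        rw [← hw, ← Complex.mul_conj', ← Complex.add_conj]
        ring
      rw [norm_smul, hfac, norm_mul, hw, Complex.norm_real, Real.norm_eq_abs, abs_mul, abs_two]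
      calc R * (2 * |w.re|) * ‖f w‖ = 2 * R * (|w.re| * ‖f w‖) := by ring
        _ ≤ 2 * R * (C * (1 + R)) := by
          have hCw := hC w
          rw [hw] at hCw
          exact mul_le_mul_of_nonneg_left hCw (by positivity)
    · exact subset_closure (by simp; linarith [norm_nonneg z])
  have hlow : R ^ 2 / 2 ≤ ‖z ^ 2 + (R : ℂ) ^ 2‖ := by
    have h := norm_sub_norm_le ((R : ℂ) ^ 2) (-z ^ 2)
    rw [norm_neg, norm_pow, norm_pow, Complex.norm_real, Real.norm_of_nonneg hR0.le,
      sub_neg_eq_add, add_comm] at h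
    nlinarith [norm_nonneg z]
  rw [norm_smul] at hmax
  have hR2 : 0 < R ^ 2 / 2 := by positivity
  refine le_of_mul_le_mul_left ?_ hR2
  calc R ^ 2 / 2 * ‖f z‖ ≤ ‖z ^ 2 + (R : ℂ) ^ 2‖ * ‖f z‖ := by gcongr
    _ ≤ 2 * R * (C * (1 + R)) := hmax
    _ ≤ 2 * R * (C * (R + R)) := by gcongr
    _ = R ^ 2 / 2 * (8 * C) := by ring

section PowerBounded

variable {B : Type*} [NormedRing B] [NormedAlgebra ℂ B]

lemma norm_mul_sub_le_of_norm_pow_le [CompleteSpace B] {b v : B} {M : ℝ}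
    (hb : ∀ n : ℕ, ‖b ^ n‖ ≤ M) {α β : ℂ} (hαβ : ‖β‖ < ‖α‖)
    (hv : v * (α • (1 : B) - β • b) = 1) : ‖v‖ * (‖α‖ - ‖β‖) ≤ M := by
  have hα : 0 < ‖α‖ := (norm_nonneg β).trans_lt hαβ
  have hα0 : α ≠ 0 := norm_pos_iff.mp hα
  set t : B := (β / α) • b with ht
  have hr : ‖β / α‖ < 1 := by rw [norm_div]; exact (div_lt_one hα).2 hαβ
  have hle : ∀ n : ℕ, ‖t ^ n‖ ≤ M * ‖β / α‖ ^ n := fun n => by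
    rw [ht, smul_pow, norm_smul, norm_pow, mul_comm]
    gcongr
    exact hb n
  have hgeom := (hasSum_geometric_of_lt_one (norm_nonneg (β / α)) hr).mul_left M
  have hsum : Summable fun n : ℕ => t ^ n := hgeom.summable.of_norm_bounded hle
  have hfac : α • (1 : B) - β • b = α • (1 - t) := by
    rw [ht, smul_sub, smul_smul, mul_div_cancel₀ _ hα0]
  have hαv : α • v = ∑' n : ℕ, t ^ n := by
    rw [hfac, mul_smul_comm, ← smul_mul_assoc] at hv
    exact left_inv_eq_right_inv hv hsum.one_sub_mul_tsum_pow
  have hnorm := tsum_of_norm_bounded hgeom hle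
  rw [← hαv, norm_smul, norm_div, ← div_eq_mul_inv,
    le_div_iff₀ (by rwa [norm_div, ← sub_pos] at hr)] at hnorm
  calc ‖v‖ * (‖α‖ - ‖β‖) = ‖α‖ * ‖v‖ * (1 - ‖β‖ / ‖α‖) := by field_simp
    _ ≤ M := hnorm

lemma norm_mul_abs_sub_le_of_norm_zpow_le [CompleteSpace B] [Nontrivial B] {a : Bˣ} {v : B} {M : ℝ}
    (ha : ∀ n : ℤ, ‖((a ^ n : Bˣ) : B)‖ ≤ M) {α β : ℂ}
    (hv : v * (α • (1 : B) - β • (a : B)) = 1) : ‖v‖ * |‖α‖ - ‖β‖| ≤ M * M := by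
  have hM : 1 ≤ M := (one_le_norm_one B).trans (by simpa using ha 0)
  rcases lt_trichotomy ‖β‖ ‖α‖ with h | h | h
  · rw [abs_of_pos (sub_pos.2 h)]
    have hav := norm_mul_sub_le_of_norm_pow_le (M := M) (fun n => by simpa using ha n) h hv
    exact hav.trans (le_mul_of_one_le_left (by linarith) hM)
  · simp only [h, sub_self, abs_zero, mul_zero]
    positivity
  · rw [abs_of_neg (sub_neg.2 h), neg_sub]
    have hv' : -((a : B) * v) * (β • (1 : B) - α • ((a⁻¹ : Bˣ) : B)) = 1 := by
      have hfac : β • (1 : B) - α • ((a⁻¹ : Bˣ) : B)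
          = -((α • (1 : B) - β • (a : B)) * ((a⁻¹ : Bˣ) : B)) := by
        simp [sub_mul]
      rw [hfac, neg_mul_neg, mul_assoc, ← mul_assoc v, hv, one_mul, Units.mul_inv]
    have hav := norm_mul_sub_le_of_norm_pow_le (b := ((a⁻¹ : Bˣ) : B)) (M := M)
      (fun n => by simpa using ha (-n)) h hv'
    rw [norm_neg] at hav
    have hva : ‖v‖ ≤ M * ‖(a : B) * v‖ := by
      calc ‖v‖ = ‖((a⁻¹ : Bˣ) : B) * ((a : B) * v)‖ := by rw [Units.inv_mul_cancel_left]
        _ ≤ ‖((a⁻¹ : Bˣ) : B)‖ * ‖(a : B) * v‖ := norm_mul_le _ _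
        _ ≤ M * ‖(a : B) * v‖ := by
          gcongr
          simpa using ha (-1)
    have hpos : 0 ≤ ‖β‖ - ‖α‖ := (sub_pos.2 h).le
    calc ‖v‖ * (‖β‖ - ‖α‖) ≤ M * ‖(a : B) * v‖ * (‖β‖ - ‖α‖) := by gcongr
      _ = M * (‖(a : B) * v‖ * (‖β‖ - ‖α‖)) := by ring
      _ ≤ M * M := by gcongr

lemma norm_le_one_of_mem_spectrum_of_norm_pow_le_s15 [CompleteSpace B] {b : B} {M : ℝ}
    (hb : ∀ n : ℕ, ‖b ^ n‖ ≤ M) {μ : ℂ} (hμ : μ ∈ spectrum ℂ b) : ‖μ‖ ≤ 1 := by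
  by_contra! h
  obtain ⟨n, hn⟩ := pow_unbounded_of_one_lt (M * ‖(1 : B)‖) h
  have hle := spectrum.norm_le_norm_mul_of_mem (spectrum.pow_mem_pow b n hμ)
  rw [norm_pow] at hle
  exact absurd (hle.trans (by gcongr; exact hb n)) hn.not_ge

lemma norm_eq_one_of_mem_spectrum_of_norm_zpow_le_s15 [CompleteSpace B] {a : Bˣ} {M : ℝ}
    (ha : ∀ n : ℤ, ‖((a ^ n : Bˣ) : B)‖ ≤ M) {μ : ℂ} (hμ : μ ∈ spectrum ℂ (a : B)) :
    ‖μ‖ = 1 := by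
  refine le_antisymm
    (norm_le_one_of_mem_spectrum_of_norm_pow_le_s15 (M := M) (fun n => by simpa using ha n) hμ) ?_
  have hinv := norm_le_one_of_mem_spectrum_of_norm_pow_le_s15 (b := ((a⁻¹ : Bˣ) : B)) (M := M)
    (fun n => by simpa using ha (-n)) (spectrum.inv₀_mem_inv hμ)
  have hμ0 : μ ≠ 0 := spectrum.ne_zero_of_mem_of_unit hμ
  rw [norm_inv] at hinv
  exact (inv_le_one₀ (norm_pos_iff.2 hμ0)).1 hinv

lemma isUnit_smul_one_sub_smul_of_spectrum_eq_singleton {b : B} {μ α β : ℂ}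
    (hb : spectrum ℂ b = {μ}) (h : α ≠ β * μ) : IsUnit (α • (1 : B) - β • b) := by
  rcases eq_or_ne β 0 with rfl | hβ
  · have hα : α ≠ 0 := by simpa using h
    simpa [← Algebra.algebraMap_eq_smul_one] using (IsUnit.mk0 α hα).map (algebraMap ℂ B)
  · have hmem : α / β ∉ spectrum ℂ b := by
      rw [hb, Set.mem_singleton_iff, div_eq_iff hβ, mul_comm]
      exact h
    have hu := (spectrum.notMem_iff.1 hmem).smul (Units.mk0 β hβ)
    rwa [Units.smul_def, Units.val_mk0, Algebra.algebraMap_eq_smul_one, smul_sub, smul_smul,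
      mul_div_cancel₀ _ hβ] at hu

end PowerBounded

/-- If a is invertible with uniformly bounded integer powers and σ(a) = {λ},
then N = λ̄ a − e is quasinilpotent (σ(N) = {0}) and moreover N = 0. -/
theorem quasinilpotent_of_singleton_spectrum
    {B : Type*} [NormedRing B] [NormedAlgebra ℂ B] [CompleteSpace B]
    (a : Bˣ) (hpb : ∃ M : ℝ, ∀ n : ℤ, ‖((a ^ n : Bˣ) : B)‖ ≤ M)
    (μ : ℂ) (hspec : spectrum ℂ (a : B) = {μ}) :
    spectrum ℂ ((starRingEnd ℂ) μ • (a : B) - 1) = {0} ∧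
      (starRingEnd ℂ) μ • (a : B) - 1 = 0 := by
  obtain ⟨M, hM⟩ := hpb
  have hμ : μ ∈ spectrum ℂ (a : B) := hspec ▸ Set.mem_singleton μ
  have : Nontrivial B := by
    by_contra h
    rw [not_nontrivial_iff_subsingleton] at h
    simp [spectrum.of_subsingleton] at hμ
  suffices h : (starRingEnd ℂ) μ • (a : B) - 1 = 0 from ⟨by rw [h, spectrum.zero_eq], h⟩
  have hμ1 : ‖μ‖ = 1 := norm_eq_one_of_mem_spectrum_of_norm_zpow_le_s15 hM hμ
  have hμμ : (starRingEnd ℂ) μ * μ = 1 := by rw [Complex.conj_mul', hμ1]; simp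
  -- With `N = μ̄ a - 1`, this is the pencil `1 - (z - 1 / 2) N`.
  let p : ℂ → B := fun z =>
    (z + 1 / 2) • (1 : B) - ((z - 1 / 2) * (starRingEnd ℂ) μ) • (a : B)
  have hp : ∀ z, IsUnit (p z) := fun z =>
    isUnit_smul_one_sub_smul_of_spectrum_eq_singleton hspec <| by
      rw [mul_assoc, hμμ, mul_one]
      intro h
      have : (1 : ℂ) = 0 := by linear_combination h
      exact one_ne_zero this
  have hdiff : Differentiable ℂ fun z => Ring.inverse (p z) := fun z =>
    DifferentiableAt.inverse (by fun_prop) (hp z)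
  have hbound : ∀ z : ℂ, |z.re| * ‖Ring.inverse (p z)‖ ≤ M * M * (1 + ‖z‖) := fun z => by
    have hv := norm_mul_abs_sub_le_of_norm_zpow_le hM (Ring.inverse_mul_cancel (p z) (hp z))
    rw [norm_mul, RCLike.norm_conj, hμ1, mul_one] at hv
    have hre : 2 * |z.re| = |‖z + 1 / 2‖ - ‖z - 1 / 2‖| * (‖z + 1 / 2‖ + ‖z - 1 / 2‖) := by
      rw [← abs_of_nonneg (by positivity : 0 ≤ ‖z + 1 / 2‖ + ‖z - 1 / 2‖), ← abs_mul, ← abs_two,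
        ← abs_mul]
      congr 1
      have h₁ := Complex.sq_norm (z + 1 / 2)
      have h₂ := Complex.sq_norm (z - 1 / 2)
      simp only [Complex.normSq_apply, Complex.add_re, Complex.add_im, Complex.sub_re,
        Complex.sub_im] at h₁ h₂
      norm_num at h₁ h₂ ⊢
      linear_combination h₂ - h₁
    have hsum : ‖z + 1 / 2‖ + ‖z - 1 / 2‖ ≤ 2 * (1 + ‖z‖) := by
      have h₁ := norm_add_le z (1 / 2)
      have h₂ := norm_sub_le z (1 / 2)
      norm_num at h₁ h₂ ⊢
      linarith
    have hmul := mul_le_mul hv hsum (by positivity) (mul_self_nonneg M)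
    rw [mul_assoc, ← hre] at hmul
    linarith
  have hconst := hdiff.apply_eq_apply_of_bounded (isBounded_iff_forall_norm_le.2
    ⟨_, Set.forall_mem_range.2 (norm_le_of_abs_re_mul_norm_le hdiff hbound)⟩) (3 / 2) (1 / 2)
  have hp₁ : p (1 / 2) = 1 := by norm_num [p]
  have hp₂ : p (3 / 2) = 1 - ((starRingEnd ℂ) μ • (a : B) - 1) := by
    norm_num [p]
    rw [two_smul]
    abel
  have hone := Ring.inverse_mul_cancel _ (hp (3 / 2))
  rw [hconst, hp₁, Ring.inverse_one, one_mul, hp₂] at hone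
  simpa using hone
end
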